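/- arXiv:1411.3463 — 4 statements merged into one kernel-verified Lean document; each statement's English description precedes it below -/
import Mathlib

section
/- Define g_i^{(1)} and G_i^{(1)} by: g_N^{(1)} = 0, G_N^{(1)} = B̌_N, g_i^{(1)} = F_i·G_{i+1}^{(1)} and G_i^{(1)} = g_i^{(1)} + B̌_i for i = 1,…,N−1. For M ≥ 2 define g_i^{(M)} by g_N^{(M)} = 0 and g_i^{(M)} = F_i·g_{i+1}^{(M)} + G_{i+1}^{(1)}·g_i^{(M−1)} + Σ_{k=2}^{M−1} g_{i+1}^{(k)}·g_i^{(M−k)} for i = 1,…,N−1, and define G_i^{(M)} = M·g_i^{(M)} + G_i^{(1)}·G_i^{(M−1)} + Σ_{k=2}^{M−1} g_i^{(k)}·G_i^{(M−k)} for i = 1,…,N. Then for every positive integer M, J_M(B) = Σ_{i=1}^{N} G_i^{(M)}. -/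
open Matrix PowerSeries

lemma coeff_conv (a b : ℕ → ℝ) (ha : a 0 = 0) (hb : b 0 = 0) (M : ℕ) (hM : 2 ≤ M) :
    coeff M (PowerSeries.mk a * PowerSeries.mk b) =
      a 1 * b (M - 1) + ∑ k ∈ Finset.Icc 2 (M - 1), a k * b (M - k) := by
  obtain ⟨m, rfl⟩ : ∃ m, M = m + 2 := ⟨M - 2, by omega⟩
  rw [PowerSeries.coeff_mul, Finset.Nat.sum_antidiagonal_eq_sum_range_succ
    (fun i j => coeff i (PowerSeries.mk a) * coeff j (PowerSeries.mk b))]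
  simp only [coeff_mk]
  rw [Finset.sum_range_succ, Finset.sum_range_succ', Finset.sum_range_succ']
  have : Finset.Icc 2 (m + 2 - 1) = (Finset.range m).image (fun k => k + 1 + 1) := by
    ext x
    simp only [Finset.mem_Icc, Finset.mem_image, Finset.mem_range]
    constructor
    · rintro ⟨h1, h2⟩
      exact ⟨x - 2, by omega, by omega⟩
    · rintro ⟨y, h1, rfl⟩
      omega
  rw [this, Finset.sum_image (by intro x _ y _ h; simpa using h)]
  simp [ha, hb]
  ring

lemma logd_prod {ι : Type*} (s : Finset ι) (f S : ι → ℝ⟦X⟧)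
    (h : ∀ i ∈ s, X * PowerSeries.derivative ℝ (f i) = - S i * f i) :
    X * PowerSeries.derivative ℝ (∏ i ∈ s, f i) = - (∑ i ∈ s, S i) * ∏ i ∈ s, f i := by
  classical
  induction s using Finset.induction_on with
  | empty => simp
  | insert a s ha ih =>
    rw [Finset.prod_insert ha, Finset.sum_insert ha, Derivation.leibniz]
    have h1 := h a (Finset.mem_insert_self a s)
    have h2 := ih (fun i hi => h i (Finset.mem_insert_of_mem hi))
    simp only [smul_eq_mul]
    linear_combination f a * h2 + (∏ i ∈ s, f i) * h1

lemma logd_lin (c : ℝ) : X * PowerSeries.derivative ℝ (1 - PowerSeries.C c * X) =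
    - (PowerSeries.C c * X * PowerSeries.mk (fun n => c ^ n)) * (1 - PowerSeries.C c * X) := by
  have : PowerSeries.mk (fun n => c ^ n) * (1 - PowerSeries.C c * X) = 1 := by
    ext n
    rcases n with _ | n
    · simp
    · rw [mul_sub, mul_one, ← mul_assoc, map_sub, coeff_succ_mul_X, coeff_mul_C]
      simp [pow_succ, coeff_one]
  have h2 : PowerSeries.derivative ℝ (1 - PowerSeries.C c * X) = - PowerSeries.C c := by
    simp [Derivation.leibniz]
  rw [h2]
  linear_combination (PowerSeries.C c * X) * this

lemma bidiag_mul {R : Type*} [CommRing R] (N : ℕ) (a b c d : ℕ → R) (i j : Fin N) :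
    ((Matrix.of fun i j : Fin N => if (j : ℕ) = i then a i else if (j : ℕ) = i + 1 then b i else 0) *
     (Matrix.of fun i j : Fin N => if (i : ℕ) = j then c j else if (i : ℕ) = j + 1 then d j else 0)) i j
    = if (i : ℕ) = j then a i * c i + (if (i : ℕ) + 1 < N then b i * d i else 0)
      else if (j : ℕ) = i + 1 then b i * c j
      else if (i : ℕ) = j + 1 then a i * d j else 0 := by
  rw [Matrix.mul_apply]
  simp only [Matrix.of_apply]
  have key : ∀ k : Fin N, (if (k : ℕ) = i then a i else if (k : ℕ) = i + 1 then b i else 0) *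
      (if (k : ℕ) = j then c j else if (k : ℕ) = j + 1 then d j else 0) =
      (if (k : ℕ) = i then a i * (if (i : ℕ) = j then c j else if (i : ℕ) = j + 1 then d j else 0) else 0)
      + (if (k : ℕ) = i + 1 then b i * (if (i : ℕ) + 1 = j then c j else if (i : ℕ) + 1 = j + 1 then d j else 0) else 0) := by
    intro k
    by_cases h1 : (k : ℕ) = i
    · simp [h1]
    · by_cases h2 : (k : ℕ) = i + 1
      · simp [h2]
      · simp [h1, h2]
  rw [Finset.sum_congr rfl (fun k _ => key k), Finset.sum_add_distrib,
    Fin.sum_univ_eq_sum_range (fun k => if k = (i : ℕ) then a i * (if (i : ℕ) = j then c j else if (i : ℕ) = j + 1 then d j else 0) else 0),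
    Fin.sum_univ_eq_sum_range (fun k => if k = (i : ℕ) + 1 then b i * (if (i : ℕ) + 1 = j then c j else if (i : ℕ) + 1 = j + 1 then d j else 0) else 0),
    Finset.sum_ite_eq', Finset.sum_ite_eq']
  have hi := i.2
  have hj := j.2
  simp only [Finset.mem_range, hi, if_true]
  by_cases h1 : (i : ℕ) = j
  · simp [h1]
  · by_cases h2 : (j : ℕ) = i + 1
    · have : (i : ℕ) + 1 < N := by omega
      have h4 : ¬ ((i : ℕ) = i + 1 + 1) := by omega
      simp [h2, this, h4]
    · have h3 : ¬ ((i : ℕ) + 1 = j) := by omega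
      simp [h1, h2, h3]

lemma det_upper_bidiag {R : Type*} [CommRing R] (N : ℕ) (a b : ℕ → R) :
    (Matrix.of fun i j : Fin N => if (j : ℕ) = i then a i
      else if (j : ℕ) = i + 1 then b i else 0).det = ∏ i ∈ Finset.range N, a i := by
  rw [Matrix.det_of_isUpperTriangular]
  · simp [Fin.prod_univ_eq_prod_range (fun i => a i)]
  · intro i j hij
    have : (j : ℕ) < i := hij
    have h1 : ¬ ((j : ℕ) = i) := by omega
    have h2 : ¬ ((j : ℕ) = i + 1) := by omega
    simp [h1, h2]

lemma det_lower_bidiag {R : Type*} [CommRing R] (N : ℕ) (a b : ℕ → R) :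
    (Matrix.of fun i j : Fin N => if (i : ℕ) = j then a j
      else if (i : ℕ) = j + 1 then b j else 0).det = ∏ i ∈ Finset.range N, a i := by
  rw [← Matrix.det_transpose, ← det_upper_bidiag N a b]
  rfl

lemma spectral_part (N : ℕ) (A : Matrix (Fin N) (Fin N) ℝ) (hA : A.IsHermitian) :
    ∃ l : Fin N → ℝ, (∀ M : ℕ, Matrix.trace (A ^ M) = ∑ i, l i ^ M) ∧
      Matrix.det (1 - (X : ℝ⟦X⟧) • A.map (PowerSeries.C)) = ∏ i, (1 - PowerSeries.C (l i) * X) := by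
  obtain ⟨U, V, l, hUV, hVU, h⟩ : ∃ (U V : Matrix (Fin N) (Fin N) ℝ) (l : Fin N → ℝ),
      U * V = 1 ∧ V * U = 1 ∧ A = U * Matrix.diagonal l * V := by
    refine ⟨hA.eigenvectorUnitary, star (hA.eigenvectorUnitary : Matrix (Fin N) (Fin N) ℝ), hA.eigenvalues, ?_, ?_, ?_⟩
    · exact Unitary.coe_mul_star_self _
    · exact Unitary.coe_star_mul_self _
    · have := hA.spectral_theorem
      rw [Unitary.conjStarAlgAut_apply] at this
      exact this
  refine ⟨l, ?_, ?_⟩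
  · intro M
    have : A ^ M = U * Matrix.diagonal (l ^ M) * V := by
      induction M with
      | zero => simp [hUV]
      | succ n ih =>
        rw [pow_succ, ih, h, pow_succ, show Matrix.diagonal (l ^ n * l) = Matrix.diagonal (l ^ n) * Matrix.diagonal l from
          (Matrix.diagonal_mul_diagonal _ _).symm]
        calc U * diagonal (l ^ n) * V * (U * diagonal l * V)
            = U * diagonal (l ^ n) * (V * U) * (diagonal l * V) := by simp only [Matrix.mul_assoc]
          _ = _ := by rw [hVU]; simp only [Matrix.mul_assoc, Matrix.mul_one]
    rw [this, Matrix.trace_mul_cycle, hVU, Matrix.one_mul, Matrix.trace_diagonal]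
    rfl
  · let φ : Matrix (Fin N) (Fin N) ℝ →+* Matrix (Fin N) (Fin N) ℝ⟦X⟧ := (PowerSeries.C).mapMatrix
    have e1 : φ U * φ V = 1 := by rw [← map_mul, hUV, map_one]
    have e2 : (1 - (X : ℝ⟦X⟧) • A.map (PowerSeries.C)) =
        φ U * (1 - (X : ℝ⟦X⟧) • φ (Matrix.diagonal l)) * φ V := by
      change (1 - (X : ℝ⟦X⟧) • φ A) = _
      rw [h, map_mul, map_mul, mul_sub, sub_mul, mul_one, e1, Matrix.mul_smul, Matrix.smul_mul]
    have e3 : (1 - (X : ℝ⟦X⟧) • φ (Matrix.diagonal l)) =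
        Matrix.diagonal (fun i => 1 - PowerSeries.C (l i) * X) := by
      ext1 i j
      by_cases hij : i = j
      · subst hij
        simp [φ, mul_comm]
      · simp [φ, hij]
    rw [e2, Matrix.det_mul, Matrix.det_mul, mul_right_comm, ← Matrix.det_mul, e1, e3, Matrix.det_diagonal]
    simp

lemma main_det (N : ℕ) (hN : 0 < N) (q e : ℕ → ℝ)
    (hq : ∀ i, i < N → 0 < q i) (he : ∀ i, i + 1 < N → 0 < e i)
    (B : Matrix (Fin N) (Fin N) ℝ)
    (hB : ∀ i j : Fin N, B i j =
      if (j : ℕ) = (i : ℕ) then Real.sqrt (q i)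
      else if (j : ℕ) = (i : ℕ) + 1 then Real.sqrt (e i) else 0)
    (h γ : ℕ → ℝ⟦X⟧) (h0 : ∀ i, i < N → constantCoeff (h i) = 0)
    (hγ : ∀ i, i < N → h i = γ i + PowerSeries.C (1 / q i) * X)
    (hγN : γ (N - 1) = 0)
    (hγi : ∀ i, i + 1 < N → γ i = PowerSeries.C (e i / q i) * h (i + 1) + h (i + 1) * γ i) :
    Matrix.det (1 - (X : ℝ⟦X⟧) • ((Bᵀ * B)⁻¹).map (PowerSeries.C)) =
      ∏ i ∈ Finset.range N, (1 - h i) := by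
  let φ : Matrix (Fin N) (Fin N) ℝ →+* Matrix (Fin N) (Fin N) ℝ⟦X⟧ := (PowerSeries.C).mapMatrix
  have hBof : B = Matrix.of fun i j : Fin N => if (j : ℕ) = i then Real.sqrt (q i)
      else if (j : ℕ) = i + 1 then Real.sqrt (e i) else 0 := by
    ext i j; exact hB i j
  have hBT : Bᵀ = Matrix.of fun i j : Fin N => if (i : ℕ) = j then Real.sqrt (q j)
      else if (i : ℕ) = j + 1 then Real.sqrt (e j) else 0 := by
    ext i j; exact hB j i
  have hdetB : B.det = ∏ i ∈ Finset.range N, Real.sqrt (q i) := by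
    rw [hBof]; exact det_upper_bidiag N (fun i => Real.sqrt (q i)) (fun i => Real.sqrt (e i))
  have hdetB2 : B.det * B.det = ∏ i ∈ Finset.range N, q i := by
    rw [hdetB, ← Finset.prod_mul_distrib]
    exact Finset.prod_congr rfl fun i hi =>
      Real.mul_self_sqrt (hq i (Finset.mem_range.1 hi)).le
  have hQ : (∏ i ∈ Finset.range N, q i) ≠ 0 :=
    Finset.prod_ne_zero_iff.2 fun i hi => (hq i (Finset.mem_range.1 hi)).ne'
  have hu : IsUnit B.det := by
    rw [isUnit_iff_ne_zero]
    intro h0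
    rw [h0] at hdetB2
    exact hQ (by simpa using hdetB2.symm)
  have huT : IsUnit Bᵀ.det := by rwa [Matrix.det_transpose]
  have hone : B * (Bᵀ * B)⁻¹ * Bᵀ = 1 := by
    rw [Matrix.mul_inv_rev, ← Matrix.mul_assoc, Matrix.mul_nonsing_inv _ hu, Matrix.one_mul,
      Matrix.nonsing_inv_mul _ huT]
  have e1 : φ (B * Bᵀ) - (X : ℝ⟦X⟧) • (1 : Matrix (Fin N) (Fin N) ℝ⟦X⟧) =
      φ B * (1 - (X : ℝ⟦X⟧) • ((Bᵀ * B)⁻¹).map (PowerSeries.C)) * φ Bᵀ := by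
    change _ = φ B * (1 - (X : ℝ⟦X⟧) • φ ((Bᵀ * B)⁻¹)) * φ Bᵀ
    rw [mul_sub, sub_mul, mul_one, Matrix.mul_smul, Matrix.smul_mul, ← map_mul, ← map_mul,
      ← map_mul, hone, map_one]
  have dB : (φ B).det = PowerSeries.C B.det := ((PowerSeries.C).map_det B).symm
  have dBT : (φ Bᵀ).det = PowerSeries.C B.det := by
    rw [← Matrix.det_transpose B]; exact ((PowerSeries.C).map_det Bᵀ).symm
  have e2 := congrArg Matrix.det e1
  rw [Matrix.det_mul, Matrix.det_mul, dB, dBT, mul_right_comm, ← map_mul, hdetB2] at e2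
  -- UL factorisation
  let δ : ℕ → ℝ⟦X⟧ := fun i => PowerSeries.C (q i) * (1 - h i)
  let t : ℕ → ℝ⟦X⟧ := fun i => PowerSeries.C (Real.sqrt (e i) * Real.sqrt (q (i + 1)))
  let s : ℕ → ℝ⟦X⟧ := fun i => t i * (δ (i + 1))⁻¹
  have hCq : ∀ i, i < N → PowerSeries.C (q i) * PowerSeries.C (1 / q i) = (1 : ℝ⟦X⟧) := by
    intro i hi
    rw [← map_mul, mul_one_div_cancel (hq i hi).ne', map_one]
  have hδinv : ∀ i, i < N → δ i * (δ i)⁻¹ = 1 := by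
    intro i hi
    apply PowerSeries.mul_inv_cancel
    simp [δ, h0 i hi, (hq i hi).ne']
  have hst : ∀ i, i + 1 < N → s i * δ (i + 1) = t i := by
    intro i hi
    have := hδinv (i + 1) hi
    simp only [s]
    linear_combination t i * this
  have htt : ∀ i, i + 1 < N → t i * t i = PowerSeries.C (e i) * PowerSeries.C (q (i + 1)) := by
    intro i hi
    simp only [t]
    rw [← map_mul, ← map_mul, mul_mul_mul_comm, Real.mul_self_sqrt (he i hi).le,
      Real.mul_self_sqrt (hq _ hi).le]
  have hdiag : ∀ i, i + 1 < N → δ i + s i * t i = PowerSeries.C (q i) + PowerSeries.C (e i) - X := by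
    intro i hi
    have hne : δ (i + 1) ≠ 0 := by
      intro h0
      have := hδinv (i + 1) hi
      rw [h0, zero_mul] at this
      exact zero_ne_one this
    apply mul_right_cancel₀ hne
    have a1 := hst i hi
    have a2 := htt i hi
    have a3 := hγi i hi
    have a4 := hγ i (by omega)
    have a5 := hCq i (by omega)
    have a6 : PowerSeries.C (q i) * PowerSeries.C (e i / q i) = (PowerSeries.C (e i) : ℝ⟦X⟧) := by
      rw [← map_mul, mul_div_cancel₀ _ (hq i (by omega)).ne']
    have a7 : δ i = PowerSeries.C (q i) - X - PowerSeries.C (q i) * γ i := by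
      simp only [δ]
      linear_combination -PowerSeries.C (q i) * a4 - X * a5
    have a8 : PowerSeries.C (q i) * γ i * (1 - h (i + 1)) = PowerSeries.C (e i) * h (i + 1) := by
      linear_combination PowerSeries.C (q i) * a3 + h (i + 1) * a6
    have a9 : δ (i + 1) = PowerSeries.C (q (i + 1)) * (1 - h (i + 1)) := rfl
    rw [a7, add_mul, mul_right_comm, a1, a2, a9]
    linear_combination - PowerSeries.C (q (i + 1)) * a8
  have hlast : δ (N - 1) = PowerSeries.C (q (N - 1)) - X := by
    have a4 := hγ (N - 1) (by omega)
    have a5 := hCq (N - 1) (by omega)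
    simp only [δ]
    rw [a4, hγN]
    linear_combination - X * a5
  have e3 : φ (B * Bᵀ) - (X : ℝ⟦X⟧) • (1 : Matrix (Fin N) (Fin N) ℝ⟦X⟧) =
      (Matrix.of fun i j : Fin N => if (j : ℕ) = i then (fun _ => 1) (i : ℕ)
        else if (j : ℕ) = i + 1 then s i else 0) *
      (Matrix.of fun i j : Fin N => if (i : ℕ) = j then δ j
        else if (i : ℕ) = j + 1 then t j else 0) := by
    ext1 i j
    rw [bidiag_mul N (fun _ => 1) s δ t i j]
    have hi := i.2
    have hj := j.2
    have hl : (φ (B * Bᵀ)) i j = PowerSeries.C ((B * Bᵀ) i j) := rfl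
    rw [Matrix.sub_apply, hl, hBT]
    rw [hBof, bidiag_mul N (fun i => Real.sqrt (q i)) (fun i => Real.sqrt (e i))
      (fun i => Real.sqrt (q i)) (fun i => Real.sqrt (e i)) i j]
    rw [Matrix.smul_apply, Matrix.one_apply]
    by_cases h1 : (i : ℕ) = j
    · have hij : i = j := Fin.ext h1
      subst hij
      simp only [if_true, smul_eq_mul, mul_one, one_mul]
      rw [Real.mul_self_sqrt (hq _ hi).le]
      by_cases h2 : (i : ℕ) + 1 < N
      · rw [if_pos h2, if_pos h2, Real.mul_self_sqrt (he _ h2).le, hdiag _ h2, map_add]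
      · rw [if_neg h2, if_neg h2, add_zero, add_zero]
        have : (i : ℕ) = N - 1 := by omega
        rw [this, hlast]
    · have hij : i ≠ j := fun hh => h1 (by rw [hh])
      simp only [if_neg h1, if_neg hij, smul_zero, sub_zero, one_mul]
      by_cases h2 : (j : ℕ) = i + 1
      · rw [if_pos h2, if_pos h2, h2, hst _ (by omega)]
      · rw [if_neg h2, if_neg h2]
        by_cases h3 : (i : ℕ) = j + 1
        · rw [if_pos h3, if_pos h3, h3]
          simp only [t]
          rw [mul_comm]
        · rw [if_neg h3, if_neg h3, map_zero]
  rw [e3, Matrix.det_mul, det_upper_bidiag N (fun _ => 1) s, det_lower_bidiag N δ t] at e2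
  have hCQ : (PowerSeries.C (∏ i ∈ Finset.range N, q i) : ℝ⟦X⟧) ≠ 0 := by
    intro hh
    apply hQ
    have := congrArg constantCoeff hh
    simpa using this
  apply mul_left_cancel₀ hCQ
  rw [← e2, map_prod]
  simp [δ, Finset.prod_mul_distrib]




/-- the new subtraction-free formula `J_M(B) = Σ_i G_i^{(M)}`, where
`J_M(B) = Tr((BᵀB)^{-M})`. Indices are 0-based: the paper's 1-based `g_i^{(M)}` is
`g M (i-1)`, `G_i^{(M)}` is `G M (i-1)`; `B̌_i = 1/q_i` is `1 / q (i-1)`;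
`F_i = e_i/q_i` is `e (i-1) / q (i-1)`. -/
theorem stmt_11 (N : ℕ) (hN : 0 < N) (q e : ℕ → ℝ)
    (hq : ∀ i, i < N → 0 < q i) (he : ∀ i, i + 1 < N → 0 < e i)
    (B : Matrix (Fin N) (Fin N) ℝ)
    (hB : ∀ i j : Fin N, B i j =
      if (j : ℕ) = (i : ℕ) then Real.sqrt (q i)
      else if (j : ℕ) = (i : ℕ) + 1 then Real.sqrt (e i) else 0)
    (g G : ℕ → ℕ → ℝ)
    (hg1N : g 1 (N - 1) = 0)
    (hG1N : G 1 (N - 1) = 1 / q (N - 1))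
    (hg1i : ∀ i, i + 1 < N → g 1 i = e i / q i * G 1 (i + 1))
    (hG1i : ∀ i, i + 1 < N → G 1 i = g 1 i + 1 / q i)
    (hgMN : ∀ M, 2 ≤ M → g M (N - 1) = 0)
    (hgMi : ∀ M, 2 ≤ M → ∀ i, i + 1 < N →
      g M i = e i / q i * g M (i + 1) + G 1 (i + 1) * g (M - 1) i
        + ∑ k ∈ Finset.Icc 2 (M - 1), g k (i + 1) * g (M - k) i)
    (hGM : ∀ M, 2 ≤ M → ∀ i, i < N →
      G M i = M * g M i + G 1 i * G (M - 1) i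
        + ∑ k ∈ Finset.Icc 2 (M - 1), g k i * G (M - k) i) :
    ∀ M, 1 ≤ M →
      Matrix.trace ((Bᵀ * B)⁻¹ ^ M) = ∑ i ∈ Finset.range N, G M i := by
  classical
  let γ : ℕ → ℝ⟦X⟧ := fun i => PowerSeries.mk fun n => if n = 0 then 0 else g n i
  let h : ℕ → ℝ⟦X⟧ := fun i => PowerSeries.mk fun n =>
    if n = 0 then 0 else if n = 1 then G 1 i else g n i
  let Γ : ℕ → ℝ⟦X⟧ := fun i => PowerSeries.mk fun n => if n = 0 then 0 else G n i
  have hG1 : ∀ i, i < N → G 1 i = g 1 i + 1 / q i := by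
    intro i hi
    by_cases h2 : i + 1 < N
    · exact hG1i i h2
    · have : i = N - 1 := by omega
      rw [this, hG1N, hg1N, zero_add]
  have h0 : ∀ i, i < N → constantCoeff (h i) = 0 := by
    intro i _
    rw [← coeff_zero_eq_constantCoeff_apply, coeff_mk]
    simp
  have hγ : ∀ i, i < N → h i = γ i + PowerSeries.C (1 / q i) * X := by
    intro i hi
    ext n
    rw [map_add, coeff_C_mul, coeff_X]
    simp only [h, γ, coeff_mk]
    rcases n with _ | _ | n
    · simp
    · simp [hG1 i hi]
    · simp
  have hγN : γ (N - 1) = 0 := by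
    ext n
    simp only [γ, coeff_mk]
    rcases n with _ | _ | n
    · simp
    · simp [hg1N]
    · simp [hgMN (n + 1 + 1) (by omega)]
  have hγi : ∀ i, i + 1 < N →
      γ i = PowerSeries.C (e i / q i) * h (i + 1) + h (i + 1) * γ i := by
    intro i hi
    ext n
    rw [map_add, coeff_C_mul]
    rcases n with _ | _ | n
    · simp [h, γ]
    · simp [h, γ, coeff_mul, Finset.Nat.antidiagonal_succ, hg1i i hi]
    · simp only [h, γ]
      rw [coeff_conv _ _ (by simp) (by simp) _ (by omega)]
      simp only [coeff_mk]
      have : ∑ k ∈ Finset.Icc 2 (n + 1 + 1 - 1), (if k = 0 then 0 else if k = 1 then G 1 (i + 1)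
          else g k (i + 1)) * (if n + 1 + 1 - k = 0 then 0 else g (n + 1 + 1 - k) i) =
          ∑ k ∈ Finset.Icc 2 (n + 1 + 1 - 1), g k (i + 1) * g (n + 1 + 1 - k) i := by
        apply Finset.sum_congr rfl
        intro k hk
        rw [Finset.mem_Icc] at hk
        rw [if_neg (by omega), if_neg (by omega), if_neg (by omega)]
      rw [this]
      simp only [if_neg (show ¬ (n + 1 + 1 = 0) by omega), if_neg (show ¬ (n + 1 + 1 = 1) by omega),
        if_neg (show ¬ (n + 1 + 1 - 1 = 0) by omega), if_neg one_ne_zero, if_true]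
      rw [hgMi (n + 1 + 1) (by omega) i hi]
      ring
  have hΓ : ∀ i, i < N → Γ i = X * PowerSeries.derivative ℝ (h i) + h i * Γ i := by
    intro i hi
    ext n
    rw [map_add]
    rcases n with _ | _ | n
    · simp [h, Γ]
    · rw [coeff_succ_X_mul, PowerSeries.coeff_derivative]
      simp [h, Γ, coeff_mul, Finset.Nat.antidiagonal_succ]
    · rw [coeff_succ_X_mul, PowerSeries.coeff_derivative]
      simp only [h, Γ]
      rw [coeff_conv _ _ (by simp) (by simp) _ (by omega)]
      simp only [coeff_mk]
      have : ∑ k ∈ Finset.Icc 2 (n + 1 + 1 - 1), (if k = 0 then 0 else if k = 1 then G 1 i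
          else g k i) * (if n + 1 + 1 - k = 0 then 0 else G (n + 1 + 1 - k) i) =
          ∑ k ∈ Finset.Icc 2 (n + 1 + 1 - 1), g k i * G (n + 1 + 1 - k) i := by
        apply Finset.sum_congr rfl
        intro k hk
        rw [Finset.mem_Icc] at hk
        rw [if_neg (by omega), if_neg (by omega), if_neg (by omega)]
      rw [this]
      simp only [if_neg (show ¬ (n + 1 + 1 = 0) by omega), if_neg (show ¬ (n + 1 + 1 = 1) by omega),
        if_neg (show ¬ (n + 1 + 1 - 1 = 0) by omega), if_neg one_ne_zero, if_true]
      rw [hGM (n + 1 + 1) (by omega) i hi]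
      push_cast
      ring
  have hHerm : ((Bᵀ * B)⁻¹).IsHermitian := by
    apply Matrix.IsHermitian.inv
    have := Matrix.isHermitian_conjTranspose_mul_self B
    rwa [Matrix.conjTranspose_eq_transpose_of_trivial] at this
  obtain ⟨l, hl1, hl2⟩ := spectral_part N _ hHerm
  rw [main_det N hN q e hq he B hB h γ h0 hγ hγN hγi] at hl2
  have d1 := logd_prod (Finset.range N) (fun i => 1 - h i) Γ (by
    intro i hi
    have := hΓ i (Finset.mem_range.1 hi)
    rw [map_sub, Derivation.map_one_eq_zero]
    linear_combination this)
  have d2 := logd_prod Finset.univ (fun i => 1 - PowerSeries.C (l i) * X) _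
    (fun i _ => logd_lin (l i))
  rw [hl2, d2] at d1
  have hne : (∏ i, (1 - PowerSeries.C (l i) * X) : ℝ⟦X⟧) ≠ 0 := by
    intro hh
    have := congrArg constantCoeff hh
    simp at this
  have d3 := neg_injective (mul_right_cancel₀ hne d1)
  intro M hM
  have d4 := congrArg (coeff M) d3
  obtain ⟨m, rfl⟩ : ∃ m, M = m + 1 := ⟨M - 1, by omega⟩
  rw [hl1]
  rw [map_sum, map_sum] at d4
  simp only [mul_assoc, coeff_C_mul, coeff_succ_X_mul, coeff_mk, Γ] at d4
  simpa [pow_succ'] using d4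
end

section
/- Let W = (BB^⊤)^{−1} with entries W_{i,j}. If 1 ≤ j < i ≤ N and 1 ≤ k < i ≤ N, then W_{i,j}·W_{k,i} = F̃_i·W_{i−1,j}·W_{k,i−1} and W_{j,i−1}·W_{k,i} = W_{j,i}·W_{k,i−1}. -/
open Matrix

/-- the two product identities for entries of `W = (BBᵀ)⁻¹`:
if `j < i` and `k < i` then `W_{i,j}·W_{k,i} = F̃_i·W_{i-1,j}·W_{k,i-1}` and
`W_{j,i-1}·W_{k,i} = W_{j,i}·W_{k,i-1}`. Indices are 0-based: the paper's
`F̃_i = e_{i-1}/q_i` is `e (i-1) / q i` at the 0-based index `i`. -/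
theorem stmt_12 (N : ℕ) (hN : 0 < N) (q e : ℕ → ℝ)
    (hq : ∀ i, i < N → 0 < q i) (he : ∀ i, i + 1 < N → 0 < e i)
    (B : Matrix (Fin N) (Fin N) ℝ)
    (hB : ∀ i j : Fin N, B i j =
      if (j : ℕ) = (i : ℕ) then Real.sqrt (q i)
      else if (j : ℕ) = (i : ℕ) + 1 then Real.sqrt (e i) else 0)
    (W : Matrix (Fin N) (Fin N) ℝ) (hW : W = (B * Bᵀ)⁻¹)
    (i j k : Fin N) (hji : (j : ℕ) < (i : ℕ)) (hki : (k : ℕ) < (i : ℕ)) :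
    W i j * W k i
        = e ((i : ℕ) - 1) / q i
          * W ⟨(i : ℕ) - 1, lt_of_le_of_lt (Nat.sub_le _ _) i.isLt⟩ j
          * W k ⟨(i : ℕ) - 1, lt_of_le_of_lt (Nat.sub_le _ _) i.isLt⟩ ∧
    W j ⟨(i : ℕ) - 1, lt_of_le_of_lt (Nat.sub_le _ _) i.isLt⟩ * W k i
        = W j i * W k ⟨(i : ℕ) - 1, lt_of_le_of_lt (Nat.sub_le _ _) i.isLt⟩ := by
  have hBT : B.BlockTriangular id := by
    intro a b hab
    have hab' : (b : ℕ) < (a : ℕ) := hab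
    rw [hB, if_neg (by omega), if_neg (by omega)]
  have hdet : IsUnit B.det := by
    rw [Matrix.det_of_upperTriangular hBT, isUnit_iff_ne_zero, Finset.prod_ne_zero_iff]
    intro a _
    rw [hB, if_pos rfl]
    exact (Real.sqrt_pos.2 (hq a a.isLt)).ne'
  have hdetT : IsUnit (Bᵀ).det := by rwa [Matrix.det_transpose]
  have hinv : (B⁻¹).BlockTriangular id := by
    haveI := Matrix.invertibleOfIsUnitDet B hdet
    exact Matrix.blockTriangular_inv_of_blockTriangular hBT
  have hBW : Bᵀ * W = B⁻¹ := by
    rw [hW, Matrix.mul_inv_rev, ← Matrix.mul_assoc, Matrix.mul_nonsing_inv _ hdetT, Matrix.one_mul]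
  have hsym : ∀ a b, W a b = W b a := by
    have h : Wᵀ = W := by
      rw [hW, Matrix.transpose_nonsing_inv, Matrix.transpose_mul, Matrix.transpose_transpose]
    intro a b
    exact congrFun (congrFun h b) a
  have hqi := hq i i.isLt
  have hei : 0 < e ((i : ℕ) - 1) := he _ (by have := i.isLt; omega)
  set p : Fin N := ⟨(i : ℕ) - 1, lt_of_le_of_lt (Nat.sub_le _ _) i.isLt⟩ with hp
  have hpv : (p : ℕ) = (i : ℕ) - 1 := rfl
  have key : ∀ m : Fin N, (m : ℕ) < (i : ℕ) →
      √(q i) * W i m + √(e ((i : ℕ) - 1)) * W p m = 0 := by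
    intro m hm
    have h0 : (Bᵀ * W) i m = 0 := by
      rw [hBW]
      exact hinv hm
    rw [← h0, Matrix.mul_apply]
    have hne : i ≠ p := by
      intro h
      have := congrArg Fin.val h
      omega
    rw [Finset.sum_eq_add_of_mem i p (Finset.mem_univ _) (Finset.mem_univ _) hne]
    · rw [Matrix.transpose_apply, Matrix.transpose_apply, hB, hB, if_pos rfl, if_neg (by omega),
        if_pos (by omega)]
    · rintro c - ⟨hci, hcp⟩
      have h1 : (c : ℕ) ≠ i := fun h => hci (Fin.ext h)
      have h2 : (c : ℕ) ≠ p := fun h => hcp (Fin.ext h)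
      rw [Matrix.transpose_apply, hB, if_neg (by omega), if_neg (by omega), zero_mul]
  have hj := key j hji
  have hk := key k hki
  have s1 : √(q i) ≠ 0 := (Real.sqrt_pos.2 hqi).ne'
  have q2 : √(q i) * √(q i) = q i := Real.mul_self_sqrt hqi.le
  have e2 : √(e ((i : ℕ) - 1)) * √(e ((i : ℕ) - 1)) = e ((i : ℕ) - 1) :=
    Real.mul_self_sqrt hei.le
  rw [hsym k i, hsym k p, hsym j p, hsym j i]
  rw [← q2, ← e2]
  generalize √(q i) = s at *
  generalize √(e ((i : ℕ) - 1)) = t at *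
  constructor
  · field_simp
    linear_combination (s * W i k) * hj - t * W p j * hk
  · apply mul_left_cancel₀ s1
    linear_combination W p j * hk - W p k * hj
end

section
/- Let W = (BB^⊤)^{−1} with entries W_{i,j}. For all indices with 1 ≤ j < i ≤ N, W_{i,j} = −√(F̃_i)·W_{i−1,j}, and by symmetry of W also W_{j,i} = −√(F̃_i)·W_{j,i−1}. -/
open Matrix

/-- for `W = (BBᵀ)⁻¹` and `j < i`, `W_{i,j} = -√(F̃_i)·W_{i-1,j}` and,
by symmetry, `W_{j,i} = -√(F̃_i)·W_{j,i-1}`. Indices are 0-based: the paper's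
`F̃_i = e_{i-1}/q_i` is `e (i-1) / q i` at the 0-based index `i`. -/
theorem stmt_13 (N : ℕ) (hN : 0 < N) (q e : ℕ → ℝ)
    (hq : ∀ i, i < N → 0 < q i) (he : ∀ i, i + 1 < N → 0 < e i)
    (B : Matrix (Fin N) (Fin N) ℝ)
    (hB : ∀ i j : Fin N, B i j =
      if (j : ℕ) = (i : ℕ) then Real.sqrt (q i)
      else if (j : ℕ) = (i : ℕ) + 1 then Real.sqrt (e i) else 0)
    (W : Matrix (Fin N) (Fin N) ℝ) (hW : W = (B * Bᵀ)⁻¹)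
    (i j : Fin N) (hji : (j : ℕ) < (i : ℕ)) :
    W i j = -Real.sqrt (e ((i : ℕ) - 1) / q i)
        * W ⟨(i : ℕ) - 1, lt_of_le_of_lt (Nat.sub_le _ _) i.isLt⟩ j ∧
    W j i = -Real.sqrt (e ((i : ℕ) - 1) / q i)
        * W j ⟨(i : ℕ) - 1, lt_of_le_of_lt (Nat.sub_le _ _) i.isLt⟩ := by
  have hT : B.BlockTriangular id := by
    intro a b hab
    have hab' : (b : ℕ) < (a : ℕ) := hab
    rw [hB, if_neg (by omega), if_neg (by omega)]
  have hdet : IsUnit B.det := by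
    rw [Matrix.det_of_upperTriangular hT, isUnit_iff_ne_zero]
    refine Finset.prod_ne_zero_iff.mpr fun a _ => ?_
    rw [hB, if_pos rfl]
    exact (Real.sqrt_pos.mpr (hq a a.isLt)).ne'
  haveI : Invertible B := Matrix.invertibleOfIsUnitDet B hdet
  have hinv : B⁻¹.BlockTriangular id := Matrix.blockTriangular_inv_of_blockTriangular hT
  have hBW : Bᵀ * W = B⁻¹ := by
    rw [hW, Matrix.mul_inv_rev, ← Matrix.mul_assoc,
      Matrix.mul_nonsing_inv _ (by rwa [Matrix.det_transpose]), Matrix.one_mul]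
  have hsymm : Wᵀ = W := by
    rw [hW, Matrix.transpose_nonsing_inv, Matrix.transpose_mul, Matrix.transpose_transpose]
  have hS : ∀ a b, W a b = W b a := fun a b => congrFun (congrFun hsymm b) a
  set p : Fin N := ⟨(i : ℕ) - 1, lt_of_le_of_lt (Nat.sub_le _ _) i.isLt⟩ with hp
  have hpv : (p : ℕ) = (i : ℕ) - 1 := rfl
  have hpi : p ≠ i := by
    intro h
    have := congrArg Fin.val h
    omega
  have h0 : ∑ k, B k i * W k j = 0 := by
    have h1 : (Bᵀ * W) i j = 0 := by
      rw [hBW]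
      exact hinv hji
    simpa [Matrix.mul_apply] using h1
  have h2 : ∑ k, B k i * W k j = B p i * W p j + B i i * W i j := by
    refine Fintype.sum_eq_add p i hpi fun k hk => ?_
    have hk1 : (k : ℕ) ≠ (p : ℕ) := fun h => hk.1 (Fin.ext h)
    have hk2 : (k : ℕ) ≠ (i : ℕ) := fun h => hk.2 (Fin.ext h)
    rw [hB, if_neg (by omega), if_neg (by omega), zero_mul]
  rw [h2, hB p i, if_neg (by omega), if_pos (by omega), hB i i, if_pos rfl, hpv] at h0
  have hqi := hq i i.isLt
  have hqs := (Real.sqrt_pos.mpr hqi).ne'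
  have main : W i j = -Real.sqrt (e ((i : ℕ) - 1) / q i) * W p j := by
    rw [Real.sqrt_div' _ hqi.le]
    field_simp
    linarith
  exact ⟨main, by rw [hS j i, hS j p]; exact main⟩
end

section
/- Define h_i^{(p)} for p = 1, 2, 3 by: h_1^{(1)} = 1/q_1; h_i^{(1)} = F̃_i·h_{i−1}^{(1)} + 1/q_i for i = 2,…,N; h_1^{(p)} = 0 for p = 2, 3; h_i^{(2)} = F̃_i·(h_{i−1}^{(2)} + 2·h_{i−1}^{(1)}·h_{i−1}^{(1)}) for i = 2,…,N; and h_i^{(3)} = F̃_i·(h_{i−1}^{(3)} + 3·h_{i−1}^{(1)}·h_{i−1}^{(2)}) + 3·h_{i−1}^{(1)}·h_i^{(2)} for i = 2,…,N. Then J_2(B) = Σ_{i=1}^{N} ( h_i^{(2)} + (h_i^{(1)})^2 ) and J_3(B) = (1/2)·Σ_{i=1}^{N} ( h_i^{(3)} + 3·h_i^{(2)}·h_i^{(1)} + 2·(h_i^{(1)})^3 ). -/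
open Matrix

lemma aux_tr (N : ℕ) (g : ℕ → ℕ → ℝ) (r F : ℕ → ℝ) (h1 h2 h3 : ℕ → ℝ)
    (hs : ∀ i j, g i j = g j i) (hd : ∀ i, g i i = h1 i)
    (hr : ∀ n i, i ≤ n → g i (n + 1) = r n * g i n)
    (hF : ∀ n, n + 1 < N → r n ^ 2 = F n)
    (h20 : h2 0 = 0) (h30 : h3 0 = 0)
    (hh2 : ∀ n, n + 1 < N → h2 (n + 1) = F n * (h2 n + 2 * h1 n * h1 n))
    (hh3 : ∀ n, n + 1 < N → h3 (n + 1) = F n * (h3 n + 3 * h1 n * h2 n)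
        + 3 * h1 n * h2 (n + 1)) (n : ℕ) (hn : n < N) :
    (∑ i ∈ Finset.range n, g i n ^ 2 = h2 n / 2) ∧
    (∑ i ∈ Finset.range n, ∑ j ∈ Finset.range n, g i n * g i j * g j n = h3 n / 6) := by
  induction n with
  | zero => simp [h20, h30]
  | succ n ih =>
    obtain ⟨a, b⟩ := ih (by omega)
    have e1 : ∑ i ∈ Finset.range (n + 1), g i (n + 1) ^ 2
        = F n * ∑ i ∈ Finset.range (n + 1), g i n ^ 2 := by
      rw [Finset.mul_sum]
      refine Finset.sum_congr rfl fun i hi => ?_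
      rw [hr n i (by simp at hi; omega), ← hF n hn]; ring
    have e2 : ∑ i ∈ Finset.range (n + 1), ∑ j ∈ Finset.range (n + 1),
          g i (n + 1) * g i j * g j (n + 1)
        = F n * ∑ i ∈ Finset.range (n + 1), ∑ j ∈ Finset.range (n + 1),
          g i n * g i j * g j n := by
      rw [Finset.mul_sum]
      refine Finset.sum_congr rfl fun i hi => ?_
      rw [Finset.mul_sum]
      refine Finset.sum_congr rfl fun j hj => ?_
      rw [hr n i (by simp at hi; omega), hr n j (by simp at hj; omega), ← hF n hn]; ring
    constructor
    · rw [e1, Finset.sum_range_succ, a, hd, hh2 n hn]; ring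
    · rw [e2]
      simp only [Finset.sum_range_succ, Finset.sum_add_distrib]
      have e3 : ∑ i ∈ Finset.range n, g i n * g i n * g n n = h2 n / 2 * h1 n := by
        rw [← a, Finset.sum_mul]
        exact Finset.sum_congr rfl fun i _ => by rw [hd]; ring
      have e4 : ∑ i ∈ Finset.range n, g n n * g n i * g i n = h2 n / 2 * h1 n := by
        rw [← a, Finset.sum_mul]
        exact Finset.sum_congr rfl fun i _ => by rw [hd, hs n i]; ring
      rw [e3, e4, b, hd, hh3 n hn, hh2 n hn]; ring

lemma aux_tr2 (N : ℕ) (g : ℕ → ℕ → ℝ) (h1 h2 h3 : ℕ → ℝ)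
    (hs : ∀ i j, g i j = g j i) (hd : ∀ i, g i i = h1 i)
    (ha : ∀ n, n < N → ∑ i ∈ Finset.range n, g i n ^ 2 = h2 n / 2)
    (hb : ∀ n, n < N →
      ∑ i ∈ Finset.range n, ∑ j ∈ Finset.range n, g i n * g i j * g j n = h3 n / 6)
    (n : ℕ) (hn : n ≤ N) :
    (∑ i ∈ Finset.range n, ∑ j ∈ Finset.range n, g i j * g j i
      = ∑ i ∈ Finset.range n, (h2 i + h1 i ^ 2)) ∧
    (∑ i ∈ Finset.range n, ∑ j ∈ Finset.range n, ∑ k ∈ Finset.range n, g i j * g j k * g k i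
      = 1 / 2 * ∑ i ∈ Finset.range n, (h3 i + 3 * h2 i * h1 i + 2 * h1 i ^ 3)) := by
  induction n with
  | zero => simp
  | succ n ih =>
    obtain ⟨a, b⟩ := ih (by omega)
    have a' := ha n (by omega)
    have b' := hb n (by omega)
    simp only [Finset.sum_range_succ, Finset.sum_add_distrib, hd]
    constructor
    · have e1 : ∑ i ∈ Finset.range n, g i n * g n i = h2 n / 2 := by
        rw [← a']; exact Finset.sum_congr rfl fun i _ => by rw [hs n i]; ring
      have e2 : ∑ i ∈ Finset.range n, g n i * g i n = h2 n / 2 := by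
        rw [← a']; exact Finset.sum_congr rfl fun i _ => by rw [hs n i]; ring
      rw [a, e1, e2]; simp only [Finset.sum_add_distrib]; ring
    · have e1 : ∑ i ∈ Finset.range n, ∑ j ∈ Finset.range n, g i j * g j n * g n i = h3 n / 6 := by
        rw [← b']
        exact Finset.sum_congr rfl fun i _ => Finset.sum_congr rfl fun j _ => by
          rw [hs n i]; ring
      have e2 : ∑ i ∈ Finset.range n, ∑ j ∈ Finset.range n, g i n * g n j * g j i = h3 n / 6 := by
        rw [← b']
        exact Finset.sum_congr rfl fun i _ => Finset.sum_congr rfl fun j _ => by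
          rw [hs n j, hs j i]; ring
      have e3 : ∑ i ∈ Finset.range n, ∑ j ∈ Finset.range n, g n i * g i j * g j n = h3 n / 6 := by
        rw [← b']
        exact Finset.sum_congr rfl fun i _ => Finset.sum_congr rfl fun j _ => by
          rw [hs n i]
      have e4 : ∑ i ∈ Finset.range n, g i n * h1 n * g n i = h2 n / 2 * h1 n := by
        rw [← a', Finset.sum_mul]; exact Finset.sum_congr rfl fun i _ => by rw [hs n i]; ring
      have e5 : ∑ i ∈ Finset.range n, g n i * g i n * h1 n = h2 n / 2 * h1 n := by
        rw [← a', Finset.sum_mul]; exact Finset.sum_congr rfl fun i _ => by rw [hs n i]; ring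
      have e6 : ∑ i ∈ Finset.range n, h1 n * g n i * g i n = h2 n / 2 * h1 n := by
        rw [← a', Finset.sum_mul]; exact Finset.sum_congr rfl fun i _ => by rw [hs n i]; ring
      rw [b, e1, e2, e3, e4, e5, e6]; simp only [Finset.sum_add_distrib]; ring

lemma aux_col (N : ℕ) (q e : ℕ → ℝ) (B : Matrix (Fin N) (Fin N) ℝ)
    (hB : ∀ i j : Fin N, B i j =
      if (j : ℕ) = (i : ℕ) then Real.sqrt (q i)
      else if (j : ℕ) = (i : ℕ) + 1 then Real.sqrt (e i) else 0)
    (x : ℕ → ℝ) (j : Fin N) :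
    ∑ k : Fin N, x k * B k j = x j * Real.sqrt (q j) +
      if (j : ℕ) = 0 then 0 else x (j - 1) * Real.sqrt (e (j - 1)) := by
  have h1 : ∀ k : Fin N, x k * B k j = (if (k : ℕ) = j then x j * Real.sqrt (q j) else 0) +
      if (k : ℕ) = j - 1 then
        (if (j : ℕ) = 0 then 0 else x (j - 1) * Real.sqrt (e (j - 1))) else 0 := by
    intro k
    rw [hB]
    by_cases c : (j : ℕ) = k
    · rw [← c]
      by_cases c0 : (j : ℕ) = 0
      · simp [c0]
      · have : (j : ℕ) ≠ j - 1 := by omega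
        simp [this]
    · rw [if_neg c, if_neg (Ne.symm c)]
      by_cases c2 : (j : ℕ) = k + 1
      · simp [c2]
      · rw [if_neg c2]
        by_cases c0 : (j : ℕ) = 0
        · simp [c0]
        · rw [if_neg (show ¬ (k : ℕ) = j - 1 by omega)]; simp
  rw [Finset.sum_congr rfl fun k _ => h1 k, Finset.sum_add_distrib,
    Fin.sum_univ_eq_sum_range (fun k => if k = (j : ℕ) then x j * Real.sqrt (q j) else 0) N,
    Fin.sum_univ_eq_sum_range (fun k => if k = (j : ℕ) - 1 then
      (if (j : ℕ) = 0 then 0 else x (j - 1) * Real.sqrt (e (j - 1))) else 0) N,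
    Finset.sum_ite_eq', Finset.sum_ite_eq', if_pos, if_pos]
  · simp; omega
  · simp

lemma aux_inv (N : ℕ) (q e : ℕ → ℝ) (hq : ∀ i, i < N → 0 < q i)
    (he : ∀ i, i + 1 < N → 0 < e i) (B : Matrix (Fin N) (Fin N) ℝ)
    (hB : ∀ i j : Fin N, B i j =
      if (j : ℕ) = (i : ℕ) then Real.sqrt (q i)
      else if (j : ℕ) = (i : ℕ) + 1 then Real.sqrt (e i) else 0)
    (g : ℕ → ℕ → ℝ) (h1 : ℕ → ℝ)
    (hs : ∀ i j, g i j = g j i) (hd : ∀ i, g i i = h1 i)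
    (hr : ∀ n i, i ≤ n → g i (n + 1) = -Real.sqrt (e n / q (n + 1)) * g i n)
    (h10 : h1 0 = 1 / q 0)
    (h1s : ∀ n, n + 1 < N → h1 (n + 1) = e n / q (n + 1) * h1 n + 1 / q (n + 1)) :
    Bᵀ * ((Matrix.of fun i j : Fin N => g i j) * B) = 1 := by
  set G : Matrix (Fin N) (Fin N) ℝ := Matrix.of fun i j : Fin N => g i j with hG
  let m : ℕ → ℕ → ℝ := fun i j => g i j * Real.sqrt (q j) +
      if (j : ℕ) = 0 then 0 else g i (j - 1) * Real.sqrt (e (j - 1))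
  have hM : ∀ i j : Fin N, (G * B) i j = m i j := fun i j => by
    rw [Matrix.mul_apply]; exact aux_col N q e B hB (fun k => g i k) j
  have hlt : ∀ i j, j < N → i < j → m i j = 0 := by
    intro i j hj hij
    obtain ⟨n, rfl⟩ : ∃ n, j = n + 1 := ⟨j - 1, by omega⟩
    have := hq _ hj
    have hs' : Real.sqrt (q (n + 1)) ≠ 0 := (Real.sqrt_pos.2 this).ne'
    simp only [m, hr n i (by omega), Nat.add_sub_cancel, Nat.succ_ne_zero, if_false]
    rw [Real.sqrt_div (he n hj).le]
    field_simp
    ring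
  have hdg : ∀ j, j < N → Real.sqrt (q j) * m j j = 1 := by
    intro j hj
    have hp := hq _ hj
    have hs' : Real.sqrt (q j) ≠ 0 := (Real.sqrt_pos.2 hp).ne'
    have hsq := Real.mul_self_sqrt hp.le
    rcases j with _ | n
    · simp only [m, hd, h10, if_true]
      rw [add_zero, mul_left_comm, hsq]; field_simp
    · have hse := Real.mul_self_sqrt (he n hj).le
      simp only [m, hd, h1s n hj, Nat.add_sub_cancel, Nat.succ_ne_zero, if_false]
      rw [hs (n + 1) n, hr n n le_rfl, hd, Real.sqrt_div (he n hj).le]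
      have e1 : √(q (n + 1)) * ((e n / q (n + 1) * h1 n + 1 / q (n + 1)) * √(q (n + 1)) +
        -(√(e n) / √(q (n + 1))) * h1 n * √(e n)) =
        (√(q (n + 1)) * √(q (n + 1))) * (e n / q (n + 1) * h1 n + 1 / q (n + 1))
         - (√(e n) * √(e n)) * h1 n := by
        field_simp
        ring
      rw [e1, hsq, hse]
      field_simp
      ring
  have key : ∀ i j : Fin N, i ≤ j → (Bᵀ * (G * B)) i j = (1 : Matrix (Fin N) (Fin N) ℝ) i j := by
    intro i j hij
    have h0 : (Bᵀ * (G * B)) i j = ∑ k : Fin N, m k j * B k i := by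
      rw [Matrix.mul_apply]
      exact Finset.sum_congr rfl fun k _ => by rw [hM, Matrix.transpose_apply, mul_comm]
    rw [h0, aux_col N q e B hB (fun k => m k j) i]
    have hij' : (i : ℕ) ≤ j := hij
    have h2 : (if (i : ℕ) = 0 then 0 else m (i - 1) j * Real.sqrt (e (i - 1))) = 0 := by
      split_ifs with c
      · rfl
      · rw [hlt _ _ j.2 (by omega), zero_mul]
    rw [h2, add_zero]
    rcases eq_or_lt_of_le hij with c | c
    · subst c; rw [mul_comm, hdg _ i.2, Matrix.one_apply_eq]
    · rw [hlt _ _ j.2 c, zero_mul, Matrix.one_apply_ne c.ne]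
  have hsym : (Bᵀ * (G * B))ᵀ = Bᵀ * (G * B) := by
    have : Gᵀ = G := by ext i j; simp [hG, hs (j : ℕ) i]
    rw [Matrix.transpose_mul, Matrix.transpose_mul, Matrix.transpose_transpose, this,
      Matrix.mul_assoc]
  ext i j
  rcases le_total i j with c | c
  · exact key i j c
  · rw [← hsym, Matrix.transpose_apply, key j i c, Matrix.one_apply, Matrix.one_apply]
    simp [eq_comm]

/-- the expressions of `J_2(B)` and `J_3(B)` in terms of
`h_i^{(1)}, h_i^{(2)}, h_i^{(3)}`:
`J_2(B) = Σ_i (h_i^{(2)} + (h_i^{(1)})²)` and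
`J_3(B) = (1/2) Σ_i (h_i^{(3)} + 3 h_i^{(2)} h_i^{(1)} + 2 (h_i^{(1)})³)`,
where `J_p(B) = Tr((BᵀB)^{-p})`. Indices are 0-based: the paper's 1-based
`h_i^{(p)}` is `h p (i-1)`; `F̃_i = e_{i-1}/q_i` is `e (i-2) / q (i-1)`. -/
theorem stmt_17 (N : ℕ) (hN : 0 < N) (q e : ℕ → ℝ)
    (hq : ∀ i, i < N → 0 < q i) (he : ∀ i, i + 1 < N → 0 < e i)
    (B : Matrix (Fin N) (Fin N) ℝ)
    (hB : ∀ i j : Fin N, B i j =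
      if (j : ℕ) = (i : ℕ) then Real.sqrt (q i)
      else if (j : ℕ) = (i : ℕ) + 1 then Real.sqrt (e i) else 0)
    (h : ℕ → ℕ → ℝ)
    (hh1a : h 1 0 = 1 / q 0)
    (hh1b : ∀ i, 0 < i → i < N → h 1 i = e (i - 1) / q i * h 1 (i - 1) + 1 / q i)
    (hh20 : h 2 0 = 0)
    (hh30 : h 3 0 = 0)
    (hh2 : ∀ i, 0 < i → i < N →
      h 2 i = e (i - 1) / q i * (h 2 (i - 1) + 2 * h 1 (i - 1) * h 1 (i - 1)))
    (hh3 : ∀ i, 0 < i → i < N →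
      h 3 i = e (i - 1) / q i * (h 3 (i - 1) + 3 * h 1 (i - 1) * h 2 (i - 1))
        + 3 * h 1 (i - 1) * h 2 i) :
    Matrix.trace ((Bᵀ * B)⁻¹ ^ 2)
        = ∑ i ∈ Finset.range N, (h 2 i + h 1 i ^ 2) ∧
    Matrix.trace ((Bᵀ * B)⁻¹ ^ 3)
        = 1 / 2 * ∑ i ∈ Finset.range N, (h 3 i + 3 * h 2 i * h 1 i + 2 * h 1 i ^ 3) := by
  set r : ℕ → ℝ := fun n => -Real.sqrt (e n / q (n + 1)) with hrdef
  let g : ℕ → ℕ → ℝ := fun i j => h 1 (min i j) * ∏ k ∈ Finset.Ico (min i j) (max i j), r k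
  have hs : ∀ i j, g i j = g j i := fun i j => by simp only [g, min_comm, max_comm]
  have hd : ∀ i, g i i = h 1 i := fun i => by simp [g]
  have hr : ∀ n i, i ≤ n → g i (n + 1) = r n * g i n := fun n i hi => by
    simp only [g, min_eq_left hi, max_eq_right hi, min_eq_left (Nat.le_succ_of_le hi),
      max_eq_right (Nat.le_succ_of_le hi)]
    rw [Finset.prod_Ico_succ_top hi]; ring
  have hinv := aux_inv N q e hq he B hB g (h 1) hs hd hr hh1a
    (fun n hn => hh1b (n + 1) (by omega) hn)
  have ht := aux_tr N g r (fun n => e n / q (n + 1)) (h 1) (h 2) (h 3) hs hd hr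
    (fun n hn => by
      rw [hrdef]
      simp only [neg_sq]
      exact Real.sq_sqrt (div_nonneg (he n hn).le (hq _ hn).le)) hh20 hh30
    (fun n hn => hh2 (n + 1) (by omega) hn) (fun n hn => hh3 (n + 1) (by omega) hn)
  obtain ⟨t2, t3⟩ := aux_tr2 N g (h 1) (h 2) (h 3) hs hd (fun n hn => (ht n hn).1)
    (fun n hn => (ht n hn).2) N le_rfl
  set G : Matrix (Fin N) (Fin N) ℝ := Matrix.of fun i j : Fin N => g i j with hG
  have hBT : IsUnit Bᵀ.det := by
    have := congrArg Matrix.det hinv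
    rw [Matrix.det_mul, Matrix.det_one] at this
    exact IsUnit.of_mul_eq_one _ this
  have hBu : IsUnit B.det := by rwa [Matrix.det_transpose] at hBT
  have hI : (Bᵀ * B)⁻¹ = B⁻¹ * G * B := by
    rw [Matrix.mul_inv_rev, Matrix.inv_eq_right_inv hinv, Matrix.mul_assoc]
  have hBB : B * B⁻¹ = 1 := Matrix.mul_nonsing_inv B hBu
  have p2 : (B⁻¹ * G * B) ^ 2 = B⁻¹ * (G * G * B) := by
    calc _ = B⁻¹ * G * (B * B⁻¹) * G * B := by rw [pow_two]; simp only [Matrix.mul_assoc]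
      _ = _ := by rw [hBB]; simp only [Matrix.mul_assoc, Matrix.one_mul]
  have p3 : (B⁻¹ * G * B) ^ 3 = B⁻¹ * (G * G * G * B) := by
    calc _ = B⁻¹ * G * G * (B * B⁻¹) * G * B := by
            rw [pow_succ, p2]; simp only [Matrix.mul_assoc]
      _ = _ := by rw [hBB]; simp only [Matrix.mul_assoc, Matrix.one_mul]
  rw [hI, p2, p3, Matrix.trace_mul_comm, Matrix.mul_assoc (G * G), hBB, Matrix.mul_one,
    Matrix.trace_mul_comm B⁻¹, Matrix.mul_assoc (G * G * G), hBB, Matrix.mul_one, ← t2, ← t3]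
  constructor
  · simp only [Matrix.trace, Matrix.diag, Matrix.mul_apply, hG, Matrix.of_apply,
      Finset.sum_range]
  · simp only [Matrix.trace, Matrix.diag, Matrix.mul_apply, hG, Matrix.of_apply,
      Finset.sum_range, Finset.sum_mul]
    exact Finset.sum_congr rfl fun i _ => Finset.sum_comm
end
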